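/- Every vertex operator algebra V of class 𝒜 satisfies the C₂-finiteness condition (dim V/C₂(V) < ∞) and is finitely generated as a vertex operator algebra. In particular, every regular vertex operator algebra satisfies the C₂-finiteness condition and is finitely generated. -/

import Mathlib

noncomputable section

/-- The generalized binomial coefficient `C(m, i)` for `m ∈ ℤ`, `i ∈ ℕ`,
as a complex number: `m(m-1)⋯(m-i+1)/i!`. -/
def cchoose (m : ℤ) (i : ℕ) : ℂ :=
  (∏ j ∈ Finset.range i, ((m : ℂ) - (j : ℂ))) / (Nat.factorial i : ℂ)

/-- A vertex operator algebra `V = ⊕ₙ V₍ₙ₎` over `ℂ`.  The vertex operator map is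
recorded through its modes `op u n v = uₙ v` (so `Y(u,x)v = Σₙ uₙv x^{-n-1}`), with
vacuum `one`, conformal vector `omega` (with `L(k) = ω_{k+1}`), central charge `cc`,
weight grading `wtSpace` with projections `proj`.  The Jacobi identity is recorded in
the equivalent form of the Borcherds identity on modes. -/
structure VOA where
  carrier : Type
  [grp : AddCommGroup carrier]
  [mdl : Module ℂ carrier]
  op : carrier → ℤ → carrier → carrier
  one : carrier
  omega : carrier
  wtSpace : ℤ → Submodule ℂ carrier
  proj : ℤ → carrier → carrier
  cc : ℂ
  op_linear_left : ∀ (n : ℤ) (w : carrier), IsLinearMap ℂ fun u => op u n w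
  op_linear_right : ∀ (u : carrier) (n : ℤ), IsLinearMap ℂ (op u n)
  trunc : ∀ u v : carrier, ∃ N : ℤ, ∀ n : ℤ, N ≤ n → op u n v = 0
  one_op : ∀ (n : ℤ) (v : carrier), op one n v = if n = -1 then v else 0
  create_nonneg : ∀ (v : carrier) (n : ℤ), 0 ≤ n → op v n one = 0
  create : ∀ v : carrier, op v (-1) one = v
  borcherds : ∀ (u v w : carrier) (l m n : ℤ),
    (∑ᶠ i : ℕ, cchoose m i • op (op u (l + (i : ℤ)) v) (m + n - (i : ℤ)) w)
      = ∑ᶠ i : ℕ, ((-1 : ℂ) ^ i * cchoose l i) •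
          (op u (l + m - (i : ℤ)) (op v (n + (i : ℤ)) w)
            - ((-1 : ℂ) ^ l) • op v (l + n - (i : ℤ)) (op u (m + (i : ℤ)) w))
  proj_linear : ∀ n : ℤ, IsLinearMap ℂ (proj n)
  proj_mem : ∀ (n : ℤ) (v : carrier), proj n v ∈ wtSpace n
  proj_eq : ∀ n : ℤ, ∀ v ∈ wtSpace n, proj n v = v
  proj_ne : ∀ m n : ℤ, m ≠ n → ∀ v ∈ wtSpace m, proj n v = 0
  proj_finite : ∀ v : carrier, (Function.support fun n => proj n v).Finite
  proj_sum : ∀ v : carrier, (∑ᶠ n : ℤ, proj n v) = v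
  fd : ∀ n : ℤ, FiniteDimensional ℂ (wtSpace n)
  lower_trunc : ∃ N : ℤ, ∀ n : ℤ, n < N → wtSpace n = ⊥
  one_wt : one ∈ wtSpace 0
  omega_wt : omega ∈ wtSpace 2
  op_wt : ∀ k m n : ℤ, ∀ u ∈ wtSpace k, ∀ v ∈ wtSpace m, op u n v ∈ wtSpace (k + m - n - 1)
  L_zero : ∀ n : ℤ, ∀ v ∈ wtSpace n, op omega 1 v = (n : ℂ) • v
  L_neg_one : ∀ (u : carrier) (n : ℤ) (w : carrier),
    op (op omega 0 u) n w = (-(n : ℂ)) • op u (n - 1) w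
  virasoro : ∀ (m n : ℤ) (v : carrier),
    op omega (m + 1) (op omega (n + 1) v) - op omega (n + 1) (op omega (m + 1) v)
      = ((m : ℂ) - (n : ℂ)) • op omega (m + n + 1) v
        + (if m + n = 0 then (((m : ℂ) ^ 3 - (m : ℂ)) / 12) * cc else 0) • v

attribute [instance] VOA.grp VOA.mdl

namespace VOA

variable (V : VOA)

/-- The Virasoro operator `L(k) = ω_{k+1}`. -/
def L (k : ℤ) (v : V.carrier) : V.carrier := V.op V.omega (k + 1) v

/-- The positive-weight part `V₊ = ⊕_{n ≥ 1} V₍ₙ₎`. -/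
def pos : Submodule ℂ V.carrier := ⨆ (n : ℤ) (_ : 1 ≤ n), V.wtSpace n

/-- Zhu's subspace `C₂(V) = span{u₋₂v : u, v ∈ V}`. -/
def C2 : Submodule ℂ V.carrier :=
  Submodule.span ℂ {x : V.carrier | ∃ u v : V.carrier, x = V.op u (-2) v}

/-- The subspace `C₁(V) = span(v₋₁V₊ (v ∈ V₊) together with L(-1)V)`. -/
def C1 : Submodule ℂ V.carrier :=
  Submodule.span ℂ
    ({x : V.carrier | ∃ u ∈ V.pos, ∃ v ∈ V.pos, x = V.op u (-1) v}
      ∪ {x : V.carrier | ∃ v : V.carrier, x = V.op V.omega 0 v})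

/-- Iterated application of modes: `iterApply [(u¹,n₁),…,(uʳ,n_r)] w = u¹_{n₁} ⋯ uʳ_{n_r} w`. -/
def iterApply : List (V.carrier × ℤ) → V.carrier → V.carrier
  | [], w => w
  | p :: l, w => V.op p.1 p.2 (iterApply l w)

/-- `U ⊆ V` generates `V` as a vertex operator algebra:  `V` is linearly spanned by
the elements `u¹_{n₁} ⋯ uʳ_{n_r} 1` with `uⁱ ∈ U`, `n_i ∈ ℤ`. -/
def generates (U : Set V.carrier) : Prop :=
  Submodule.span ℂ {x : V.carrier | ∃ l : List (V.carrier × ℤ),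
    (∀ p ∈ l, p.1 ∈ U) ∧ x = V.iterApply l V.one} = ⊤

/-- `V` is finitely generated as a vertex operator algebra. -/
def FinitelyGenerated : Prop := ∃ S : Finset V.carrier, V.generates ↑S

end VOA

/-- A weak `V`-module: all axioms of a module (truncation, vacuum, Jacobi identity in
Borcherds form) except those involving gradings. -/
structure WeakModule (V : VOA) where
  carrier : Type
  [grp : AddCommGroup carrier]
  [mdl : Module ℂ carrier]
  op : V.carrier → ℤ → carrier → carrier
  op_linear_left : ∀ (n : ℤ) (w : carrier), IsLinearMap ℂ fun u => op u n w
  op_linear_right : ∀ (u : V.carrier) (n : ℤ), IsLinearMap ℂ (op u n)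
  trunc : ∀ (u : V.carrier) (w : carrier), ∃ N : ℤ, ∀ n : ℤ, N ≤ n → op u n w = 0
  one_op : ∀ (n : ℤ) (w : carrier), op V.one n w = if n = -1 then w else 0
  borcherds : ∀ (u v : V.carrier) (w : carrier) (l m n : ℤ),
    (∑ᶠ i : ℕ, cchoose m i • op (V.op u (l + (i : ℤ)) v) (m + n - (i : ℤ)) w)
      = ∑ᶠ i : ℕ, ((-1 : ℂ) ^ i * cchoose l i) •
          (op u (l + m - (i : ℤ)) (op v (n + (i : ℤ)) w)
            - ((-1 : ℂ) ^ l) • op v (l + n - (i : ℤ)) (op u (m + (i : ℤ)) w))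

attribute [instance] WeakModule.grp WeakModule.mdl

namespace WeakModule

variable {V : VOA} (W : WeakModule V)

/-- `L(0)` acting on a weak module, as a linear map. -/
def L0 : W.carrier →ₗ[ℂ] W.carrier := IsLinearMap.mk' _ (W.op_linear_right V.omega 1)

/-- The `L(0)`-eigenspace of eigenvalue `h`. -/
def eig (h : ℂ) : Submodule ℂ W.carrier :=
  LinearMap.ker (W.L0 - h • (LinearMap.id : W.carrier →ₗ[ℂ] W.carrier))

/-- The coefficient `v*ₙ` of the adjoint vertex operator
`⟨Y*(v,x)α, w⟩ = ⟨α, Y(e^{xL(1)}(-x^{-2})^{L(0)}v, x^{-1})w⟩` acting on the full dual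
space: for `v` homogeneous of weight `h`,
`(v*ₙ α)(w) = (-1)^h Σ_{i≥0} (1/i!) α((L(1)^i v)_{2h-n-i-2} w)`, extended to general
`v` via the weight-space projections. -/
def dmode (v : V.carrier) (n : ℤ) (α : W.carrier → ℂ) (w : W.carrier) : ℂ :=
  ∑ᶠ h : ℤ, ∑ᶠ i : ℕ,
    ((-1 : ℂ) ^ h / (Nat.factorial i : ℂ)) *
      α (W.op ((V.L 1)^[i] (V.proj h v)) (2 * h - n - (i : ℤ) - 2) w)

/-- `D(W) ⊆ W*`: the linear functionals `α` on `W` such that for every `v ∈ V`,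
`Y*(v,x)α ∈ W*((x))`, i.e. `v*ₙ α = 0` for `n` sufficiently large. -/
def DW : Set (W.carrier → ℂ) :=
  {α | IsLinearMap ℂ α ∧
    ∀ v : V.carrier, ∃ N : ℤ, ∀ n : ℤ, N ≤ n → ∀ w : W.carrier, W.dmode v n α w = 0}

/-- A subspace stable under all modes of all vertex operators, i.e. a `V`-submodule. -/
def IsStable (S : Submodule ℂ W.carrier) : Prop :=
  ∀ (v : V.carrier) (n : ℤ), ∀ m ∈ S, W.op v n m ∈ S

/-- An irreducible (nonzero, no proper nonzero stable subspaces) `V`-submodule. -/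
def IsIrreducibleSub (S : Submodule ℂ W.carrier) : Prop :=
  S ≠ ⊥ ∧ W.IsStable S ∧
    ∀ T : Submodule ℂ W.carrier, W.IsStable T → T ≤ S → T = ⊥ ∨ T = S

/-- A stable subspace which is an ordinary module: `L(0)` acts semisimply on it with
finite-dimensional eigenspaces, and for each `h` the eigenvalues `h + m` do not occur
for `m` a sufficiently negative integer. -/
def IsOrdinarySub (S : Submodule ℂ W.carrier) : Prop :=
  S ≤ (⨆ h : ℂ, W.eig h ⊓ S) ∧ (∀ h : ℂ, FiniteDimensional ℂ ↥(W.eig h ⊓ S)) ∧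
    ∀ h : ℂ, ∃ N : ℤ, ∀ m : ℤ, m ≤ N → W.eig (h + (m : ℂ)) ⊓ S = ⊥

/-- The weak module `W` is irreducible. -/
def IsIrreducible : Prop :=
  (⊥ : Submodule ℂ W.carrier) ≠ ⊤ ∧
    ∀ S : Submodule ℂ W.carrier, W.IsStable S → S = ⊥ ∨ S = ⊤

/-- `Cₙ(W) = span{v₋ₙw : v ∈ V, w ∈ W}`. -/
def Cn (n : ℤ) : Submodule ℂ W.carrier :=
  Submodule.span ℂ {x : W.carrier | ∃ (v : V.carrier) (w : W.carrier), x = W.op v (-n) w}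

/-- `B(W) = span(u₋₁W (u ∈ V₊) together with v₀W (v homogeneous, wt v ≥ 2))`. -/
def BW : Submodule ℂ W.carrier :=
  Submodule.span ℂ
    ({x : W.carrier | ∃ v ∈ V.pos, ∃ w : W.carrier, x = W.op v (-1) w}
      ∪ {x : W.carrier | ∃ k : ℤ, 2 ≤ k ∧ ∃ v ∈ V.wtSpace k, ∃ w : W.carrier, x = W.op v 0 w})

/-- Zhu's subspace `O(W) = span{Σ_{i≥0} C(wt v, i) v_{i-2} w}` so that `A(W) = W/O(W)`. -/
def OW : Submodule ℂ W.carrier :=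
  Submodule.span ℂ
    {x : W.carrier | ∃ (k : ℤ) (v : V.carrier), v ∈ V.wtSpace k ∧
      ∃ w : W.carrier, x = ∑ᶠ i : ℕ, cchoose k i • W.op v ((i : ℤ) - 2) w}

/-- A subspace `T ⊇ O(W)` of `W` is closed under the Frenkel–Zhu left and right
`A(V)`-actions `v * w = Σᵢ C(wt v, i) v_{i-1} w` and `w * v = Σᵢ C(wt v - 1, i) v_{i-1} w`;
for `T ⊇ O(W)` this expresses that `T/O(W)` is an `A(V)`-sub-bimodule of `A(W)`. -/
def BimoduleClosed (T : Submodule ℂ W.carrier) : Prop :=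
  ∀ k : ℤ, ∀ v ∈ V.wtSpace k, ∀ w ∈ T,
    (∑ᶠ i : ℕ, cchoose k i • W.op v ((i : ℤ) - 1) w) ∈ T ∧
    (∑ᶠ i : ℕ, cchoose (k - 1) i • W.op v ((i : ℤ) - 1) w) ∈ T

/-- Equivalence (isomorphism) of weak modules. -/
def Equiv (M N : WeakModule V) : Prop :=
  ∃ e : M.carrier ≃ₗ[ℂ] N.carrier,
    ∀ (v : V.carrier) (n : ℤ) (w : M.carrier), e (M.op v n w) = N.op v n (e w)

end WeakModule

/-- `V` is of class 𝒜: `L(0)` acts semisimply on every weak `V`-module. -/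
def VOA.classA (V : VOA) : Prop :=
  ∀ M : WeakModule V, (⨆ h : ℂ, M.eig h) = ⊤

/-- `V` is regular: every weak `V`-module is a direct sum of irreducible ordinary
`V`-modules. -/
def VOA.regular (V : VOA) : Prop :=
  ∀ M : WeakModule V, ∃ (ι : Type) (S : ι → Submodule ℂ M.carrier),
    (∀ i, M.IsIrreducibleSub (S i) ∧ M.IsOrdinarySub (S i)) ∧
    (∀ i, Disjoint (S i) (⨆ (j : ι) (_ : j ≠ i), S j)) ∧ (⨆ i, S i) = ⊤

/-- A generalized `V`-module: a weak module with a semisimple `L(0)`-action, graded by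
the `L(0)`-eigenvalues, with weight-space projections `projW`. -/
structure GenModule (V : VOA) extends WeakModule V where
  wt : ℂ → Submodule ℂ carrier
  projW : ℂ → carrier → carrier
  projW_linear : ∀ h : ℂ, IsLinearMap ℂ (projW h)
  projW_mem : ∀ (h : ℂ) (w : carrier), projW h w ∈ wt h
  projW_eq : ∀ h : ℂ, ∀ w ∈ wt h, projW h w = w
  projW_ne : ∀ g h : ℂ, g ≠ h → ∀ w ∈ wt g, projW h w = 0
  projW_finite : ∀ w : carrier, (Function.support fun h => projW h w).Finite
  projW_sum : ∀ w : carrier, (∑ᶠ h : ℂ, projW h w) = w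
  wt_L0 : ∀ h : ℂ, ∀ w ∈ wt h, op V.omega 1 w = h • w
  wt_op : ∀ k : ℤ, ∀ v ∈ V.wtSpace k, ∀ (h : ℂ) (n : ℤ), ∀ w ∈ wt h,
    op v n w ∈ wt (h + (k : ℂ) - (n : ℂ) - 1)

/-- An ordinary `V`-module: a generalized module whose weight spaces are
finite-dimensional and whose weights are truncated from below in each coset `h + ℤ`. -/
structure OrdModule (V : VOA) extends GenModule V where
  wt_fd : ∀ h : ℂ, FiniteDimensional ℂ ↥(wt h)
  wt_lower : ∀ h : ℂ, ∃ N : ℤ, ∀ m : ℤ, m ≤ N → wt (h + (m : ℂ)) = ⊥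

namespace GenModule

variable {V : VOA} (W : GenModule V)

/-- `W₊ = ⊕_{Re h > 0} W₍ₕ₎`. -/
def posW : Submodule ℂ W.carrier := ⨆ (h : ℂ) (_ : 0 < h.re), W.wt h

/-- `C₁(W) = span(v₋₁W₊ (v ∈ V₊) together with L(-1)W)`. -/
def C1W : Submodule ℂ W.carrier :=
  Submodule.span ℂ
    ({x : W.carrier | ∃ v ∈ V.pos, ∃ w ∈ W.posW, x = W.op v (-1) w}
      ∪ {x : W.carrier | ∃ w : W.carrier, x = W.op V.omega 0 w})

/-- The restricted dual `W' = ⊕ₕ W₍ₕ₎* ⊆ W*`: the linear functionals vanishing on all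
but finitely many weight spaces. -/
def restrictedDual : Set (W.carrier → ℂ) :=
  {α | IsLinearMap ℂ α ∧ {h : ℂ | ∃ w ∈ W.wt h, α w ≠ 0}.Finite}

end GenModule

/-- `D(W)⁰`: the sum of the `L(0)`-eigenspaces of the weak module `D(W) ⊆ W*`, where
`L*(0) = ω*₁` acts on `α ∈ W*` by `(L*(0)α)(w) = α(L(0)w)`. -/
def OrdModule.DW0 {V : VOA} (W : OrdModule V) : Set (W.carrier → ℂ) :=
  {α | ∃ (S : Finset ℂ) (f : ℂ → (W.carrier → ℂ)),
    (∀ h ∈ S, f h ∈ W.toWeakModule.DW ∧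
      ∀ w : W.carrier, f h (W.op V.omega 1 w) = h * f h w) ∧
    α = ∑ h ∈ S, f h}

/-- An ℕ-gradable weak `V`-module: a weak module with an ℕ-grading
`W = ⊕_{n∈ℕ} W(n)` with `v_m W(n) ⊆ W(wt v + n - m - 1)` (graded pieces of negative
index are zero). -/
structure NGradedModule (V : VOA) extends WeakModule V where
  gr : ℤ → Submodule ℂ carrier
  gr_neg : ∀ n : ℤ, n < 0 → gr n = ⊥
  gr_sup : (⨆ n : ℤ, gr n) = ⊤
  gr_indep : ∀ n : ℤ, Disjoint (gr n) (⨆ (m : ℤ) (_ : m ≠ n), gr m)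
  gr_op : ∀ k : ℤ, ∀ v ∈ V.wtSpace k, ∀ m n : ℤ, ∀ w ∈ gr n,
    op v m w ∈ gr (k + n - m - 1)

/-- An intertwining operator of type `(W₃; W₁ W₂)` in the sense of
Frenkel–Huang–Lepowsky, recorded through its complex-indexed modes
`I w₁ h w₂ = (w₁)ₕ w₂` (so `Y(w₁,x)w₂ = Σ_{h∈ℂ} (w₁)ₕ w₂ x^{-h-1}`):
linearity, truncation, the `L(-1)`-derivative property, and the Jacobi identity in
component (Borcherds) form. -/
def IsIntertwiner {V : VOA} (W1 W2 W3 : OrdModule V)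
    (I : W1.carrier → ℂ → W2.carrier → W3.carrier) : Prop :=
  (∀ (h : ℂ) (w2 : W2.carrier), IsLinearMap ℂ fun w1 => I w1 h w2) ∧
  (∀ (w1 : W1.carrier) (h : ℂ), IsLinearMap ℂ (I w1 h)) ∧
  (∀ (w1 : W1.carrier) (w2 : W2.carrier) (h : ℂ),
    ∃ N : ℤ, ∀ n : ℤ, N ≤ n → I w1 (h + (n : ℂ)) w2 = 0) ∧
  (∀ (w1 : W1.carrier) (h : ℂ) (w2 : W2.carrier),
    I (W1.op V.omega 0 w1) h w2 = (-h) • I w1 (h - 1) w2) ∧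
  (∀ (u : V.carrier) (w1 : W1.carrier) (w2 : W2.carrier) (l m : ℤ) (h : ℂ),
    (∑ᶠ i : ℕ, cchoose m i • I (W1.op u (l + (i : ℤ)) w1) ((m : ℂ) + h - (i : ℂ)) w2)
      = ∑ᶠ i : ℕ, ((-1 : ℂ) ^ i * cchoose l i) •
          (W3.op u (l + m - (i : ℤ)) (I w1 (h + (i : ℂ)) w2)
            - ((-1 : ℂ) ^ l) • I w1 ((l : ℂ) + h - (i : ℂ)) (W2.op u (m + (i : ℤ)) w2)))

/-- The fusion rule `dim I(W₃; W₁W₂)` is finite: the space of intertwining operators of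
the indicated type is finite-dimensional. -/
def FusionFinite {V : VOA} (W1 W2 W3 : OrdModule V) : Prop :=
  FiniteDimensional ℂ
    ↥(Submodule.span ℂ {I : W1.carrier → ℂ → W2.carrier → W3.carrier |
        IsIntertwiner W1 W2 W3 I})

end

section C2Proof
open Filter

/-- Eventual vanishing turns a `finsum` into a finite range sum. -/
lemma fin_ev {M : Type*} [AddCommMonoid M] {f : ℕ → M} (hf : ∀ᶠ i in atTop, f i = 0) :
    ∀ᶠ B in atTop, (∑ᶠ i, f i) = ∑ i ∈ Finset.range B, f i := by
  obtain ⟨N, hN⟩ := eventually_atTop.1 hf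
  filter_upwards [eventually_ge_atTop N] with B hB
  apply finsum_eq_sum_of_support_subset
  intro i hi
  simp only [Finset.coe_range, Set.mem_Iio]
  by_contra h
  exact hi (hN i (by omega))

lemma cc_eq (m : ℤ) (i : ℕ) : cchoose m i = ((Ring.choose m i : ℤ) : ℂ) := by
  have h := Ring.descPochhammer_eq_factorial_smul_choose m i
  rw [← Polynomial.eval_eq_smeval, descPochhammer_eval_eq_prod_range] at h
  have h2 := congrArg (Int.cast : ℤ → ℂ) h
  unfold cchoose
  rw [div_eq_iff (by exact_mod_cast Nat.factorial_ne_zero i)]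
  push_cast at h2
  rw [h2]
  simp [mul_comm]

lemma cc_zero (m : ℤ) : cchoose m 0 = 1 := by simp [cchoose]

lemma cc_zero_left (i : ℕ) (hi : i ≠ 0) : cchoose 0 i = 0 := by
  rw [cc_eq, Ring.choose_zero_pos ℤ (Nat.pos_of_ne_zero hi)]; simp

lemma cc_succ_mul (m : ℤ) (j : ℕ) :
    ((j : ℂ) + 1) * cchoose m (j + 1) = ((m : ℂ) - j) * cchoose m j := by
  unfold cchoose
  rw [Finset.prod_range_succ, Nat.factorial_succ]
  have h1 : ((j : ℂ) + 1) ≠ 0 := by exact_mod_cast Nat.succ_ne_zero j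
  have h2 : ((j.factorial : ℕ) : ℂ) ≠ 0 := by exact_mod_cast Nat.factorial_ne_zero j
  push_cast
  field_simp

lemma cc_pascal (m : ℤ) (j : ℕ) :
    cchoose (m + 1) (j + 1) = cchoose m j + cchoose m (j + 1) := by
  simp only [cc_eq, Ring.choose_succ_succ]; push_cast; rfl

lemma cc_neg (a : ℤ) (j : ℕ) : cchoose a j = (-1) ^ j * cchoose ((j : ℤ) - 1 - a) j := by
  have h := Ring.choose_neg (-a) j
  rw [neg_neg] at h
  rw [cc_eq, cc_eq, h, show -a + (j : ℤ) - 1 = (j : ℤ) - 1 - a by ring]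
  rw [Units.smul_def]
  simp

lemma cc_vand (a b : ℤ) (J : ℕ) :
    cchoose (a + b) J = ∑ x ∈ Finset.HasAntidiagonal.antidiagonal J, cchoose a x.1 * cchoose b x.2 := by
  simp only [cc_eq, Ring.add_choose_eq J (Commute.all a b)]
  push_cast; rfl

lemma cc_key (a m : ℤ) (J : ℕ) :
    ∑ x ∈ Finset.HasAntidiagonal.antidiagonal J, ((-1 : ℂ) ^ x.1 * cchoose m x.1) * cchoose (a - x.1) x.2
      = cchoose (a - m) J := by
  rw [cc_neg (a - m) J, show (J : ℤ) - 1 - (a - m) = m + (J - 1 - a) by ring, cc_vand,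
    Finset.mul_sum]
  refine Finset.sum_congr rfl fun x hx => ?_
  rw [Finset.HasAntidiagonal.mem_antidiagonal] at hx
  rw [cc_neg (a - x.1) x.2, ← hx, pow_add]
  rw [show (x.2 : ℤ) - 1 - (a - x.1) = ((x.1 + x.2 : ℕ) : ℤ) - 1 - a by push_cast; ring]
  ring

lemma box2 {M : Type*} [AddCommMonoid M] (f : ℕ → ℕ → M) (B : ℕ)
    (hf : ∀ a b, B ≤ a + b → f a b = 0) :
    ∑ a ∈ Finset.range B, ∑ b ∈ Finset.range B, f a b
      = ∑ N ∈ Finset.range B, ∑ x ∈ Finset.HasAntidiagonal.antidiagonal N, f x.1 x.2 := by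
  rw [← Finset.sum_product', Finset.sum_sigma']
  symm
  refine Finset.sum_bij_ne_zero (fun (s : (_ : ℕ) × ℕ × ℕ) _ _ => s.2) ?_ ?_ ?_ ?_
  · rintro ⟨N, a, b⟩ h _
    simp only [Finset.mem_sigma, Finset.mem_range, Finset.HasAntidiagonal.mem_antidiagonal,
      Finset.mem_product] at h ⊢
    omega
  · rintro ⟨N, a, b⟩ h _ ⟨N', a', b'⟩ h' _ e
    simp only [Finset.mem_sigma, Finset.mem_range, Finset.HasAntidiagonal.mem_antidiagonal, Prod.mk.injEq] at h h' e
    obtain ⟨rfl, rfl⟩ := e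
    obtain rfl : N = N' := by omega
    rfl
  · rintro ⟨a, b⟩ h h0
    refine ⟨⟨a + b, a, b⟩, ?_, h0, rfl⟩
    simp only [Finset.mem_sigma, Finset.mem_range, Finset.HasAntidiagonal.mem_antidiagonal, and_true]
    by_contra hc
    exact h0 (hf a b (by omega))
  · intros; rfl

lemma box3 {M : Type*} [AddCommMonoid M] (f : ℕ → ℕ → ℕ → M) (B : ℕ)
    (hf : ∀ a b c, B ≤ a + b + c → f a b c = 0) :
    ∑ a ∈ Finset.range B, ∑ b ∈ Finset.range B, ∑ c ∈ Finset.range B, f a b c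
      = ∑ N ∈ Finset.range B, ∑ x ∈ Finset.HasAntidiagonal.antidiagonal N,
          ∑ y ∈ Finset.HasAntidiagonal.antidiagonal x.2, f x.1 y.1 y.2 := by
  rw [← box2 (fun a N => ∑ y ∈ Finset.HasAntidiagonal.antidiagonal N, f a y.1 y.2)]
  · refine Finset.sum_congr rfl fun a _ => ?_
    exact box2 (f a) B fun b c h => hf a b c (by omega)
  · intro a b h
    refine Finset.sum_eq_zero fun y hy => hf _ _ _ ?_
    rw [Finset.HasAntidiagonal.mem_antidiagonal] at hy
    omega

/-- Reassociation of a fourfold antidiagonal sum. -/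
lemma reassoc4 {M : Type*} [AddCommMonoid M] (f : ℕ → ℕ → ℕ → ℕ → M) (N : ℕ) :
    ∑ x ∈ Finset.HasAntidiagonal.antidiagonal N, ∑ y ∈ Finset.HasAntidiagonal.antidiagonal x.2,
        ∑ z ∈ Finset.HasAntidiagonal.antidiagonal y.1, f x.1 z.1 z.2 y.2
      = ∑ x ∈ Finset.HasAntidiagonal.antidiagonal N, ∑ y ∈ Finset.HasAntidiagonal.antidiagonal x.2,
        ∑ z ∈ Finset.HasAntidiagonal.antidiagonal y.2, f z.1 y.1 z.2 x.1 := by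
  simp only [Finset.sum_sigma']
  refine Finset.sum_nbij'
    (fun s => ⟨(s.2.1.2, s.1.1 + s.2.1.1), (s.2.2.1, s.1.1 + s.2.2.2), (s.1.1, s.2.2.2)⟩)
    (fun s => ⟨(s.2.2.1, s.2.1.1 + s.2.2.2 + s.1.1), (s.2.1.1 + s.2.2.2, s.1.1),
      (s.2.1.1, s.2.2.2)⟩) ?_ ?_ ?_ ?_ ?_
  · rintro ⟨⟨i, r⟩, ⟨r', t⟩, ⟨p, q⟩⟩ h
    simp only [Finset.mem_sigma, Finset.HasAntidiagonal.mem_antidiagonal] at h ⊢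
    obtain ⟨h1, h2, h3⟩ := h
    refine ⟨?_, ?_, ?_⟩ <;> first | trivial | omega
  · rintro ⟨⟨i, r⟩, ⟨r', t⟩, ⟨p, q⟩⟩ h
    simp only [Finset.mem_sigma, Finset.HasAntidiagonal.mem_antidiagonal] at h ⊢
    obtain ⟨h1, h2, h3⟩ := h
    refine ⟨?_, ?_, ?_⟩ <;> first | trivial | omega
  · rintro ⟨⟨i, r⟩, ⟨r', t⟩, ⟨p, q⟩⟩ h
    simp only [Finset.mem_sigma, Finset.HasAntidiagonal.mem_antidiagonal] at h ⊢
    obtain ⟨h1, h2, h3⟩ := h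
    subst h3; subst h2; rfl
  · rintro ⟨⟨i, r⟩, ⟨r', t⟩, ⟨p, q⟩⟩ h
    simp only [Finset.mem_sigma, Finset.HasAntidiagonal.mem_antidiagonal] at h ⊢
    obtain ⟨h1, h2, h3⟩ := h
    subst h3; subst h2
    simp [Sigma.mk.injEq]; omega
  · intros; rfl

end C2Proof

section C2Proof
open Filter

/-- The `n`-th product as a bilinear map. -/
noncomputable def VOA.opB (V : VOA) (n : ℤ) : V.carrier →ₗ[ℂ] V.carrier →ₗ[ℂ] V.carrier :=
  LinearMap.mk₂ ℂ (fun u w => V.op u n w)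
    (fun a b w => (V.op_linear_left n w).map_add a b)
    (fun c a w => (V.op_linear_left n w).map_smul c a)
    (fun a v w => (V.op_linear_right a n).map_add v w)
    (fun c a w => (V.op_linear_right a n).map_smul c w)

lemma VOA.opB_apply (V : VOA) (n : ℤ) (u w : V.carrier) : V.opB n u w = V.op u n w := rfl

lemma VOA.trunc_ev (V : VOA) (u v : V.carrier) (a : ℤ) :
    ∀ᶠ i : ℕ in atTop, V.op u (a + i) v = 0 := by
  obtain ⟨N, hN⟩ := V.trunc u v
  filter_upwards [eventually_ge_atTop (N - a).toNat] with i hi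
  exact hN _ (by omega)

lemma VOA.op_zero_left (V : VOA) (n : ℤ) (w : V.carrier) : V.op 0 n w = 0 :=
  (V.op_linear_left n w).map_zero

lemma VOA.op_zero_right (V : VOA) (n : ℤ) (u : V.carrier) : V.op u n 0 = 0 :=
  (V.op_linear_right u n).map_zero

lemma VOA.borE (V : VOA) (u v w : V.carrier) (l m n : ℤ) : ∀ᶠ B in atTop,
    (∑ i ∈ Finset.range B, cchoose m i • V.op (V.op u (l + (i : ℤ)) v) (m + n - (i : ℤ)) w)
      = ∑ i ∈ Finset.range B, ((-1 : ℂ) ^ i * cchoose l i) •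
          (V.op u (l + m - (i : ℤ)) (V.op v (n + (i : ℤ)) w)
            - ((-1 : ℂ) ^ l) • V.op v (l + n - (i : ℤ)) (V.op u (m + (i : ℤ)) w)) := by
  have h1 := fin_ev (f := fun i : ℕ =>
    cchoose m i • V.op (V.op u (l + (i : ℤ)) v) (m + n - (i : ℤ)) w) (by
      filter_upwards [V.trunc_ev u v l] with i hi
      rw [hi, V.op_zero_left, smul_zero])
  have h2 := fin_ev (f := fun i : ℕ => ((-1 : ℂ) ^ i * cchoose l i) •
          (V.op u (l + m - (i : ℤ)) (V.op v (n + (i : ℤ)) w)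
            - ((-1 : ℂ) ^ l) • V.op v (l + n - (i : ℤ)) (V.op u (m + (i : ℤ)) w))) (by
      filter_upwards [V.trunc_ev v w n, V.trunc_ev u w m] with i hi hj
      rw [hi, hj, V.op_zero_right, V.op_zero_right, smul_zero, sub_zero, smul_zero])
  filter_upwards [h1, h2] with B e1 e2
  rw [← e1, ← e2, V.borcherds]

/-- `L(1)` as a linear endomorphism. -/
noncomputable def VOA.L1 (V : VOA) : Module.End ℂ V.carrier := V.opB 2 V.omega

/-- Divided powers of `L(1)`. -/
noncomputable def VOA.Ld (V : VOA) (i : ℕ) : Module.End ℂ V.carrier :=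
  ((i.factorial : ℂ))⁻¹ • V.L1 ^ i

lemma VOA.Ld_zero (V : VOA) (v : V.carrier) : V.Ld 0 v = v := by simp [VOA.Ld]

lemma VOA.L1_Ld (V : VOA) (i : ℕ) (v : V.carrier) :
    V.L1 (V.Ld i v) = ((i : ℂ) + 1) • V.Ld (i + 1) v := by
  have h1 : ((i : ℂ) + 1) ≠ 0 := by exact_mod_cast Nat.succ_ne_zero i
  have h2 : ((i.factorial : ℕ) : ℂ) ≠ 0 := by exact_mod_cast Nat.factorial_ne_zero i
  simp only [VOA.Ld, LinearMap.smul_apply, map_smul, smul_smul, pow_succ', Module.End.mul_apply]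
  congr 1
  rw [Nat.factorial_succ]
  push_cast
  field_simp

lemma VOA.L1_wt (V : VOA) {h : ℤ} {v : V.carrier} (hv : v ∈ V.wtSpace h) :
    V.L1 v ∈ V.wtSpace (h - 1) := by
  have := V.op_wt 2 h 2 V.omega V.omega_wt v hv
  rwa [show 2 + h - 2 - 1 = h - 1 by ring] at this

lemma VOA.Ld_wt (V : VOA) {h : ℤ} {v : V.carrier} (hv : v ∈ V.wtSpace h) (i : ℕ) :
    V.Ld i v ∈ V.wtSpace (h - i) := by
  refine Submodule.smul_mem _ _ ?_
  induction i with
  | zero => simpa using hv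
  | succ i ih =>
    rw [pow_succ', Module.End.mul_apply]
    have := V.L1_wt ih
    rwa [show h - (i : ℤ) - 1 = h - ((i + 1 : ℕ) : ℤ) by push_cast; ring] at this

/-- A lower bound on the weights. -/
noncomputable def VOA.lowb (V : VOA) : ℤ := V.lower_trunc.choose

lemma VOA.eq_zero_of_wt (V : VOA) {n : ℤ} (hn : n < V.lowb) {v : V.carrier}
    (hv : v ∈ V.wtSpace n) : v = 0 := by
  rw [V.lower_trunc.choose_spec n hn] at hv
  simpa using hv

/-- Finite form of the commutator formula. -/
lemma VOA.commE (V : VOA) (u v w : V.carrier) (m n : ℤ) :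
    (∑ᶠ i : ℕ, cchoose m i • V.op (V.op u (i : ℤ) v) (m + n - (i : ℤ)) w)
      = V.op u m (V.op v n w) - V.op v n (V.op u m w) := by
  have h := V.borcherds u v w 0 m n
  rw [finsum_eq_single (fun i : ℕ => ((-1 : ℂ) ^ i * cchoose 0 i) •
          (V.op u (0 + m - (i : ℤ)) (V.op v (n + (i : ℤ)) w)
            - ((-1 : ℂ) ^ (0 : ℤ)) • V.op v (0 + n - (i : ℤ)) (V.op u (m + (i : ℤ)) w))) 0
    (fun i hi => by simp [cc_zero_left i hi])] at h
  simpa [cc_zero] using h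

lemma VOA.L1_op (V : VOA) {h : ℤ} {u : V.carrier} (hu : u ∈ V.wtSpace h) (n : ℤ) (w : V.carrier) :
    V.L1 (V.op u n w) = V.op (V.L1 u) n w + ((2 * h - n - 2 : ℤ) : ℂ) • V.op u (n + 1) w
      + V.op u n (V.L1 w) := by
  have hc := V.commE V.omega u w 2 n
  rw [finsum_eq_sum_of_support_subset (s := Finset.range 3)] at hc
  · simp only [Finset.sum_range_succ, Finset.sum_range_zero, zero_add] at hc
    have e1 : V.op V.omega ((1 : ℕ) : ℤ) u = (h : ℂ) • u := V.L_zero h u hu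
    have e0 : V.op (V.op V.omega ((0 : ℕ) : ℤ) u) (2 + n - ((0 : ℕ) : ℤ)) w
        = (-((n + 2 : ℤ) : ℂ)) • V.op u (n + 1) w := by
      rw [show (2 + n - ((0 : ℕ) : ℤ)) = n + 2 by push_cast; ring, Nat.cast_zero, V.L_neg_one]
      rw [show n + 2 - 1 = n + 1 by ring]
    have e2 : V.op (V.op V.omega ((2 : ℕ) : ℤ) u) (2 + n - ((2 : ℕ) : ℤ)) w
        = V.op (V.L1 u) n w := by
      rw [show (2 + n - ((2 : ℕ) : ℤ)) = n by push_cast; ring]; rfl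
    rw [e1, e0, e2, (V.op_linear_left _ w).map_smul,
      show (2 + n - ((1 : ℕ) : ℤ)) = n + 1 by push_cast; ring] at hc
    have c1 : cchoose 2 1 = 2 := by simp [cchoose]
    have c2 : cchoose 2 2 = 1 := by simp [cchoose, Finset.prod_range_succ]; norm_num
    rw [cc_zero, c1, c2] at hc
    have : V.L1 (V.op u n w) = V.op V.omega 2 (V.op u n w) := rfl
    rw [this, eq_add_of_sub_eq hc.symm]
    have : V.op V.omega 2 w = V.L1 w := rfl
    rw [this]
    push_cast
    module
  · intro i hi
    simp only [Finset.coe_range, Set.mem_Iio]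
    by_contra hc
    apply hi
    have : cchoose 2 i = 0 := by
      unfold cchoose
      rw [Finset.prod_eq_zero (i := 2) (by simp; omega) (by simp), zero_div]
    simp [this]

open Finset.HasAntidiagonal in
/-- The homogeneous components of `e^{L(1)} u_n e^{-L(1)}`. -/
noncomputable def VOA.EE (V : VOA) (h : ℤ) (u : V.carrier) (n : ℤ) (r : ℕ) (w : V.carrier) :
    V.carrier :=
  ∑ x ∈ antidiagonal r, cchoose (2 * h - n - x.1 - 2) x.2 • V.op (V.Ld x.1 u) (n + x.2) w

open Finset.HasAntidiagonal in
lemma VOA.L1_EE (V : VOA) {h : ℤ} {u : V.carrier} (hu : u ∈ V.wtSpace h) (n : ℤ) (r : ℕ)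
    (w : V.carrier) :
    V.L1 (V.EE h u n r w) = ((r : ℂ) + 1) • V.EE h u n (r + 1) w + V.EE h u n r (V.L1 w) := by
  have key : ((r : ℂ) + 1) • V.EE h u n (r + 1) w
      = (∑ x ∈ antidiagonal (r + 1), ((x.1 : ℂ) * cchoose (2 * h - n - x.1 - 1) x.2) •
          V.op (V.Ld x.1 u) (n + x.2) w)
        + ∑ x ∈ antidiagonal (r + 1), ((x.2 : ℂ) * cchoose (2 * h - n - x.1 - 2) x.2
            - (x.1 : ℂ) * (cchoose (2 * h - n - x.1 - 1) x.2 - cchoose (2 * h - n - x.1 - 2) x.2)) •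
          V.op (V.Ld x.1 u) (n + x.2) w := by
    rw [VOA.EE, Finset.smul_sum, ← Finset.sum_add_distrib]
    refine Finset.sum_congr rfl fun x hx => ?_
    rw [mem_antidiagonal] at hx
    rw [smul_smul, ← add_smul]
    congr 1
    have : (r : ℂ) + 1 = (x.1 : ℂ) + x.2 := by exact_mod_cast hx.symm
    rw [this]; ring
  rw [key, Finset.Nat.sum_antidiagonal_succ, Finset.Nat.sum_antidiagonal_succ']
  simp only [VOA.EE, map_sum, map_smul, cc_zero]
  simp only [Nat.cast_zero, zero_mul, zero_smul, sub_self, mul_zero, zero_add,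
    ← Finset.sum_add_distrib]
  refine Finset.sum_congr rfl fun x hx => ?_
  rw [V.L1_op (V.Ld_wt hu x.1), V.L1_Ld, (V.op_linear_left _ w).map_smul]
  set a : ℤ := 2 * h - n - x.1 - 2 with ha
  have e1 : (2 * h - n - ((x.1 + 1 : ℕ) : ℤ) - 1) = a := by push_cast; omega
  have e2 : 2 * h - n - (x.1 : ℤ) - 1 = a + 1 := by omega
  have e3 : n + (x.2 : ℤ) + 1 = n + ((x.2 + 1 : ℕ) : ℤ) := by push_cast; omega
  have hs := cc_succ_mul a x.2
  rw [e1, e2, e3, cc_pascal]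
  have e4 : (((2 * (h - x.1) - (n + x.2) - 2 : ℤ)) : ℂ) = (a : ℂ) - x.2 - x.1 := by
    rw [ha]; push_cast; ring
  rw [e4]
  push_cast
  rw [hs]
  module

open Finset.HasAntidiagonal in
lemma VOA.Ld_op (V : VOA) {h : ℤ} {u : V.carrier} (hu : u ∈ V.wtSpace h) (n : ℤ) (k : ℕ)
    (w : V.carrier) :
    V.Ld k (V.op u n w) = ∑ y ∈ antidiagonal k, V.EE h u n y.1 (V.Ld y.2 w) := by
  induction k with
  | zero => simp [VOA.EE, VOA.Ld_zero, cc_zero]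
  | succ k ih =>
    have h1 : ((k : ℂ) + 1) ≠ 0 := by exact_mod_cast Nat.succ_ne_zero k
    apply smul_right_injective _ h1
    simp only
    rw [← V.L1_Ld, ih, map_sum]
    have key : ((k : ℂ) + 1) • ∑ y ∈ antidiagonal (k + 1), V.EE h u n y.1 (V.Ld y.2 w)
      = (∑ y ∈ antidiagonal (k + 1), (y.1 : ℂ) • V.EE h u n y.1 (V.Ld y.2 w))
        + ∑ y ∈ antidiagonal (k + 1), (y.2 : ℂ) • V.EE h u n y.1 (V.Ld y.2 w) := by
      rw [Finset.smul_sum, ← Finset.sum_add_distrib]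
      refine Finset.sum_congr rfl fun x hx => ?_
      rw [mem_antidiagonal] at hx
      rw [← add_smul]
      congr 1
      exact_mod_cast hx.symm
    rw [key, Finset.Nat.sum_antidiagonal_succ, Finset.Nat.sum_antidiagonal_succ']
    simp only [Nat.cast_zero, zero_smul, zero_add, ← Finset.sum_add_distrib]
    refine Finset.sum_congr rfl fun x hx => ?_
    rw [V.L1_EE hu, V.L1_Ld]
    congr 1
    · push_cast; rfl
    · push_cast
      simp only [VOA.EE, (V.op_linear_right _ _).map_smul, Finset.smul_sum]
      exact Finset.sum_congr rfl fun z _ => smul_comm _ _ _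

end C2Proof

section C2Proof
open Filter

/-- The adjoint mode on the weight-`h` part. -/
noncomputable def VOA.thH (V : VOA) (h n : ℤ) : V.carrier →ₗ[ℂ] V.carrier →ₗ[ℂ] V.carrier :=
  ((-1 : ℂ) ^ h) • ∑ i ∈ Finset.range (h - V.lowb + 1).toNat,
    (V.opB (2 * h - n - i - 2)).comp (V.Ld i)

/-- The projection as a linear map. -/
noncomputable def VOA.pr (V : VOA) (h : ℤ) : V.carrier →ₗ[ℂ] V.carrier :=
  IsLinearMap.mk' _ (V.proj_linear h)

/-- The adjoint mode. -/
noncomputable def VOA.th (V : VOA) (n : ℤ) (v : V.carrier) : Module.End ℂ V.carrier :=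
  ∑ᶠ h : ℤ, V.thH h n (V.pr h v)

lemma VOA.hom_induct (V : VOA) {P : V.carrier → Prop}
    (hh : ∀ (h : ℤ), ∀ v ∈ V.wtSpace h, P v) (ha : ∀ x y, P x → P y → P (x + y))
    (v : V.carrier) : P v := by
  rw [← V.proj_sum v]
  exact finsum_induction P (hh 0 0 (Submodule.zero_mem _)) ha fun i => hh i _ (V.proj_mem i v)

lemma VOA.th_supp (V : VOA) (n : ℤ) (v : V.carrier) :
    (Function.support fun h : ℤ => V.thH h n (V.pr h v)).Finite := by
  refine (V.proj_finite v).subset fun h hh hc => hh ?_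
  have : V.pr h v = 0 := hc
  simp [this]

lemma VOA.th_hom (V : VOA) {h : ℤ} {v : V.carrier} (hv : v ∈ V.wtSpace h) (n : ℤ) :
    V.th n v = V.thH h n v := by
  unfold VOA.th
  rw [finsum_eq_single _ h]
  · have : V.pr h v = v := V.proj_eq h v hv
    rw [this]
  · intro k hk
    have : V.pr k v = 0 := V.proj_ne h k (Ne.symm hk) v hv
    rw [this, map_zero]

lemma VOA.th_add (V : VOA) (n : ℤ) (u v : V.carrier) : V.th n (u + v) = V.th n u + V.th n v := by
  unfold VOA.th
  rw [← finsum_add_distrib (V.th_supp n u) (V.th_supp n v)]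
  simp only [map_add]

lemma VOA.th_smul (V : VOA) (n : ℤ) (c : ℂ) (v : V.carrier) : V.th n (c • v) = c • V.th n v := by
  unfold VOA.th
  rw [smul_finsum' c (V.th_supp n v)]
  simp only [map_smul]

lemma VOA.th_zero (V : VOA) (n : ℤ) : V.th n 0 = 0 := by
  have := V.th_smul n 0 0
  simpa using this

lemma VOA.th_range (V : VOA) {h : ℤ} {v : V.carrier} (hv : v ∈ V.wtSpace h) (n : ℤ)
    (w : V.carrier) (B : ℕ) (hB : (h - V.lowb + 1).toNat ≤ B) :
    V.th n v w = ((-1 : ℂ) ^ h) • ∑ i ∈ Finset.range B, V.op (V.Ld i v) (2 * h - n - i - 2) w := by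
  rw [V.th_hom hv]
  simp only [VOA.thH, LinearMap.smul_apply, LinearMap.sum_apply, LinearMap.comp_apply,
    VOA.opB_apply]
  congr 1
  apply Finset.sum_subset
  · intro i hi
    simp only [Finset.mem_range] at *
    omega
  · intro i _ hi
    simp only [Finset.mem_range] at hi
    rw [V.eq_zero_of_wt (by omega) (V.Ld_wt hv i), V.op_zero_left]

lemma VOA.th_low (V : VOA) (v w : V.carrier) (a : ℤ) :
    ∀ᶠ i : ℕ in atTop, V.th (a - i) v w = 0 := by
  induction v using V.hom_induct with
  | hh h v hv =>
    have : ∀ᶠ i : ℕ in atTop, ∀ j ∈ Finset.range (h - V.lowb + 1).toNat,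
        V.op (V.Ld j v) ((2 * h - a - j - 2) + i) w = 0 := by
      rw [Filter.eventually_all_finset]
      exact fun j _ => V.trunc_ev _ _ _
    filter_upwards [this] with i hi
    rw [V.th_range hv _ _ _ le_rfl, Finset.sum_eq_zero, smul_zero]
    intro j hj
    rw [show 2 * h - (a - i) - (j : ℤ) - 2 = (2 * h - a - j - 2) + i by ring]
    exact hi j hj
  | ha x y hx hy =>
    filter_upwards [hx, hy] with i h1 h2
    rw [V.th_add, LinearMap.add_apply, h1, h2, add_zero]

open Finset.HasAntidiagonal in
lemma VOA.levelId (V : VOA) {h : ℤ} {u : V.carrier} (hu : u ∈ V.wtSpace h) (v : V.carrier)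
    (l m : ℤ) (N : ℕ) :
    ∑ x ∈ antidiagonal N, ((-1 : ℂ) ^ x.1 * cchoose m x.1) • V.Ld x.2 (V.op u (l + x.1) v)
      = ∑ x ∈ antidiagonal N, ∑ y ∈ antidiagonal x.2,
          cchoose (2 * h - m - y.1 - 2 - l) y.2 • V.op (V.Ld y.1 u) (l + y.2) (V.Ld x.1 v) := by
  have := reassoc4 (fun i p q t => ((-1 : ℂ) ^ i * cchoose m i) •
    cchoose (2 * h - (l + i) - p - 2) q • V.op (V.Ld p u) (l + i + q) (V.Ld t v)) N
  simp only [V.Ld_op hu, VOA.EE, Finset.smul_sum]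
  refine this.trans ?_
  refine Finset.sum_congr rfl fun x _ => Finset.sum_congr rfl fun y _ => ?_
  have hk := cc_key (2 * h - l - y.1 - 2) m y.2
  rw [show 2 * h - l - (y.1 : ℤ) - 2 - m = 2 * h - m - y.1 - 2 - l by ring] at hk
  rw [← hk, Finset.sum_smul]
  refine Finset.sum_congr rfl fun z hz => ?_
  rw [mem_antidiagonal] at hz
  rw [smul_smul, ← hz]
  congr 2
  · congr 1; ring
  · push_cast; ring

open Finset.HasAntidiagonal in
lemma VOA.dualB_hom (V : VOA) {h k : ℤ} {u v : V.carrier} (hu : u ∈ V.wtSpace h)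
    (hv : v ∈ V.wtSpace k) (w : V.carrier) (l m n : ℤ) : ∀ᶠ B in atTop,
    (∑ i ∈ Finset.range B, cchoose m i • V.th (m + n - i) (V.op u (l + i) v) w)
      = ∑ i ∈ Finset.range B, ((-1 : ℂ) ^ i * cchoose l i) •
          (V.th (n + i) v (V.th (l + m - i) u w)
            - ((-1 : ℂ) ^ l) • V.th (m + i) u (V.th (l + n - i) v w)) := by
  have hneg : (-1 : ℂ) ≠ 0 := by norm_num
  have hbor := (Filter.eventually_all_finset (Finset.range (h - V.lowb + 1).toNat)).2
    fun p _ => (Filter.eventually_all_finset (Finset.range (k - V.lowb + 1).toNat)).2 fun t _ =>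
      V.borE (V.Ld p u) (V.Ld t v) w l (2 * h - m - p - 2 - l) (2 * k - l - n - t - 2)
  filter_upwards [hbor, eventually_ge_atTop (h - V.lowb + 1).toNat,
    eventually_ge_atTop (k - V.lowb + 1).toNat,
    eventually_ge_atTop (h + k - l - 1 - V.lowb + 1).toNat] with B hB hBu hBv hBuv
  have hB' : ∀ p t : ℕ,
      (∑ i ∈ Finset.range B, cchoose (2 * h - m - p - 2 - l) i •
          V.op (V.op (V.Ld p u) (l + (i : ℤ)) (V.Ld t v))
          ((2 * h - m - p - 2 - l) + (2 * k - l - n - t - 2) - (i : ℤ)) w)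
      = ∑ i ∈ Finset.range B, ((-1 : ℂ) ^ i * cchoose l i) •
          (V.op (V.Ld p u) (l + (2 * h - m - p - 2 - l) - (i : ℤ))
              (V.op (V.Ld t v) ((2 * k - l - n - t - 2) + (i : ℤ)) w)
            - ((-1 : ℂ) ^ l) • V.op (V.Ld t v) (l + (2 * k - l - n - t - 2) - (i : ℤ))
              (V.op (V.Ld p u) ((2 * h - m - p - 2 - l) + (i : ℤ)) w)) := by
    intro p t
    by_cases hp : p < (h - V.lowb + 1).toNat
    · by_cases ht : t < (k - V.lowb + 1).toNat
      · exact hB p (Finset.mem_range.2 hp) t (Finset.mem_range.2 ht)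
      · have : V.Ld t v = 0 := V.eq_zero_of_wt (by omega) (V.Ld_wt hv t)
        simp [this, V.op_zero_left, V.op_zero_right]
    · have : V.Ld p u = 0 := V.eq_zero_of_wt (by omega) (V.Ld_wt hu p)
      simp [this, V.op_zero_left, V.op_zero_right]
  clear hB hbor
  set M : ℤ := 2 * h + 2 * k - 2 * l - m - n - 4 with hM
  set sg : ℂ := -((-1 : ℂ) ^ l * (-1) ^ h * (-1) ^ k) with hsg
  -- left side
  have hL : (∑ i ∈ Finset.range B, cchoose m i • V.th (m + n - i) (V.op u (l + i) v) w)
      = sg • ∑ i ∈ Finset.range B, ∑ r ∈ Finset.range B,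
          V.op (((-1 : ℂ) ^ i * cchoose m i) • V.Ld r (V.op u (l + i) v)) (M - (i + r : ℕ)) w := by
    rw [Finset.smul_sum]
    refine Finset.sum_congr rfl fun i _ => ?_
    have hw := V.op_wt h k (l + i) u hu v hv
    rw [V.th_range hw _ _ B (by omega), smul_smul, Finset.smul_sum, Finset.smul_sum]
    refine Finset.sum_congr rfl fun r _ => ?_
    rw [(V.op_linear_left _ w).map_smul, smul_smul]
    have e : 2 * (h + k - (l + i) - 1) - (m + n - i) - (r : ℤ) - 2 = M - ((i + r : ℕ) : ℤ) := by
      push_cast; omega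
    rw [e]
    congr 1
    have : (-1 : ℂ) ^ (h + k - (l + i) - 1) = -((-1) ^ l * (-1) ^ h * (-1) ^ k) * (-1) ^ i := by
      rw [zpow_sub₀ hneg, zpow_sub₀ hneg, zpow_add₀ hneg, zpow_add₀ hneg]
      have s1 : ((-1 : ℂ) ^ l) * (-1) ^ l = 1 := by rw [← mul_zpow]; norm_num
      have s2 : ((-1 : ℂ) ^ i) * (-1) ^ i = 1 := by rw [← mul_pow]; norm_num
      have z1 : ((-1 : ℂ) ^ l) ≠ 0 := zpow_ne_zero _ hneg
      have z2 : ((-1 : ℂ) ^ i) ≠ 0 := pow_ne_zero _ hneg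
      have e3 : (-1 : ℂ) ^ h * (-1) ^ k / ((-1) ^ l * (-1) ^ i)
          = (-1 : ℂ) ^ h * (-1) ^ k * ((-1) ^ l * (-1) ^ i) := by
        rw [div_eq_iff (mul_ne_zero z1 z2)]
        linear_combination (-(-1 : ℂ) ^ h * (-1) ^ k) * (((-1 : ℂ) ^ l) * (-1) ^ l * s2 + s1)
      rw [zpow_natCast, zpow_one, div_neg, div_one, e3]
      ring
    rw [this, hsg]
    ring
  have hL2 := box2 (fun i r => V.op (((-1 : ℂ) ^ i * cchoose m i) • V.Ld r (V.op u (l + i) v))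
    (M - (i + r : ℕ)) w) B (by
      intro i r hir
      have hw := V.Ld_wt (V.op_wt h k (l + i) u hu v hv) r
      rw [V.eq_zero_of_wt (by omega) hw, smul_zero, V.op_zero_left])
  have hR2 := box3 (fun t p J => V.op (cchoose (2 * h - m - p - 2 - l) J •
      V.op (V.Ld p u) (l + J) (V.Ld t v)) (M - (t + (p + J) : ℕ)) w) B (by
      intro t p J hir
      have hw := V.op_wt _ _ (l + J) _ (V.Ld_wt hu p) _ (V.Ld_wt hv t)
      rw [V.eq_zero_of_wt (by omega) hw, smul_zero, V.op_zero_left])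
  have hmid : (∑ N ∈ Finset.range B, ∑ x ∈ antidiagonal N,
      V.op (((-1 : ℂ) ^ x.1 * cchoose m x.1) • V.Ld x.2 (V.op u (l + x.1) v))
        (M - (x.1 + x.2 : ℕ)) w)
      = ∑ N ∈ Finset.range B, ∑ x ∈ antidiagonal N, ∑ y ∈ antidiagonal x.2,
        V.op (cchoose (2 * h - m - y.1 - 2 - l) y.2 •
          V.op (V.Ld y.1 u) (l + y.2) (V.Ld x.1 v)) (M - (x.1 + (y.1 + y.2) : ℕ)) w := by
    refine Finset.sum_congr rfl fun N _ => ?_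
    have e := congrArg (fun z => V.opB (M - N) z w) (V.levelId hu v l m N)
    simp only [map_sum, LinearMap.sum_apply, VOA.opB_apply] at e
    refine Eq.trans (Finset.sum_congr rfl fun x hx => ?_) (e.trans
      (Finset.sum_congr rfl fun x hx => Finset.sum_congr rfl fun y hy => ?_))
    · rw [mem_antidiagonal] at hx
      rw [hx]
    · rw [mem_antidiagonal] at hx hy
      rw [hy, hx]
  rw [hL, hL2, hmid, ← hR2]
  have hR : ∀ i ∈ Finset.range B, ((-1 : ℂ) ^ i * cchoose l i) •
          (V.th (n + i) v (V.th (l + m - i) u w)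
            - ((-1 : ℂ) ^ l) • V.th (m + i) u (V.th (l + n - i) v w))
      = ∑ t ∈ Finset.range B, ∑ p ∈ Finset.range B, sg • (((-1 : ℂ) ^ i * cchoose l i) •
          (V.op (V.Ld p u) (l + (2 * h - m - p - 2 - l) - (i : ℤ))
              (V.op (V.Ld t v) ((2 * k - l - n - t - 2) + (i : ℤ)) w)
            - ((-1 : ℂ) ^ l) • V.op (V.Ld t v) (l + (2 * k - l - n - t - 2) - (i : ℤ))
              (V.op (V.Ld p u) ((2 * h - m - p - 2 - l) + (i : ℤ)) w))) := by
    intro i _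
    have a1 : V.th (n + i) v (V.th (l + m - i) u w) = ∑ t ∈ Finset.range B, ∑ p ∈ Finset.range B,
        ((-1 : ℂ) ^ h * (-1) ^ k) • V.op (V.Ld t v) (l + (2 * k - l - n - t - 2) - (i : ℤ))
              (V.op (V.Ld p u) ((2 * h - m - p - 2 - l) + (i : ℤ)) w) := by
      rw [V.th_range hu _ _ B hBu, V.th_range hv _ _ B hBv, Finset.smul_sum]
      refine Finset.sum_congr rfl fun t _ => ?_
      rw [← V.opB_apply, map_smul, map_sum, smul_smul, Finset.smul_sum]
      refine Finset.sum_congr rfl fun p _ => ?_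
      rw [V.opB_apply, mul_comm]
      congr 2
      · ring
      · congr 1; ring
    have a2 : V.th (m + i) u (V.th (l + n - i) v w) = ∑ t ∈ Finset.range B, ∑ p ∈ Finset.range B,
        ((-1 : ℂ) ^ h * (-1) ^ k) • V.op (V.Ld p u) (l + (2 * h - m - p - 2 - l) - (i : ℤ))
              (V.op (V.Ld t v) ((2 * k - l - n - t - 2) + (i : ℤ)) w) := by
      rw [V.th_range hv _ _ B hBv, V.th_range hu _ _ B hBu, Finset.smul_sum, Finset.sum_comm]
      refine Finset.sum_congr rfl fun t _ => ?_
      rw [← V.opB_apply, map_smul, map_sum, smul_smul, Finset.smul_sum]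
      refine Finset.sum_congr rfl fun p _ => ?_
      rw [V.opB_apply]
      congr 2
      · ring
      · congr 1; ring
    rw [a1, a2, Finset.smul_sum, ← Finset.sum_sub_distrib, Finset.smul_sum]
    refine Finset.sum_congr rfl fun t _ => ?_
    rw [Finset.smul_sum, ← Finset.sum_sub_distrib, Finset.smul_sum]
    refine Finset.sum_congr rfl fun p _ => ?_
    have s1 : ((-1 : ℂ) ^ l) * (-1) ^ l = 1 := by rw [← mul_zpow]; norm_num
    rw [hsg]
    generalize V.op (V.Ld t v) _ (V.op (V.Ld p u) _ w) = Y
    generalize V.op (V.Ld p u) _ (V.op (V.Ld t v) _ w) = X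
    generalize (-1 : ℂ) ^ h = H at *
    generalize (-1 : ℂ) ^ k = K at *
    generalize (-1 : ℂ) ^ l = L at *
    linear_combination (norm := module) (-(((-1 : ℂ) ^ i * cchoose l i) * (H * K)) * s1) • Y
  rw [Finset.sum_congr rfl hR, Finset.smul_sum]
  refine Eq.trans ?_ Finset.sum_comm
  refine Finset.sum_congr rfl fun t _ => ?_
  rw [Finset.smul_sum]
  refine Eq.trans ?_ Finset.sum_comm
  refine Finset.sum_congr rfl fun p _ => ?_
  rw [← Finset.smul_sum, ← hB' p t]
  congr 1
  refine Finset.sum_congr rfl fun i _ => ?_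
  rw [(V.op_linear_left _ w).map_smul]
  congr 2
  push_cast; omega

lemma VOA.dualB (V : VOA) (u v : V.carrier) (w : V.carrier) (l m n : ℤ) : ∀ᶠ B in atTop,
    (∑ i ∈ Finset.range B, cchoose m i • V.th (m + n - i) (V.op u (l + i) v) w)
      = ∑ i ∈ Finset.range B, ((-1 : ℂ) ^ i * cchoose l i) •
          (V.th (n + i) v (V.th (l + m - i) u w)
            - ((-1 : ℂ) ^ l) • V.th (m + i) u (V.th (l + n - i) v w)) := by
  induction u using V.hom_induct with
  | hh h u hu =>
    induction v using V.hom_induct with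
    | hh k v hv => exact V.dualB_hom hu hv w l m n
    | ha x y hx hy =>
      filter_upwards [hx, hy] with B h1 h2
      simp only [V.th_add, (V.op_linear_right _ _).map_add, LinearMap.add_apply, smul_add, map_add]
      rw [Finset.sum_add_distrib, h1, h2, ← Finset.sum_add_distrib]
      refine Finset.sum_congr rfl fun i _ => ?_
      module
  | ha x y hx hy =>
      filter_upwards [hx, hy] with B h1 h2
      simp only [V.th_add, (V.op_linear_left _ _).map_add, LinearMap.add_apply, smul_add, map_add]
      rw [Finset.sum_add_distrib, h1, h2, ← Finset.sum_add_distrib]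
      refine Finset.sum_congr rfl fun i _ => ?_
      module

end C2Proof

section C2Proof
open Filter

lemma VOA.Ld_of_L1_zero (V : VOA) {v : V.carrier} (hv : V.L1 v = 0) (i : ℕ) (hi : i ≠ 0) :
    V.Ld i v = 0 := by
  obtain ⟨j, rfl⟩ := Nat.exists_eq_succ_of_ne_zero hi
  simp only [VOA.Ld, LinearMap.smul_apply, Nat.succ_eq_add_one, pow_succ, Module.End.mul_apply, hv,
    map_zero, smul_zero]

lemma VOA.th_of_L1_zero (V : VOA) {h : ℤ} {v : V.carrier} (hv : v ∈ V.wtSpace h)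
    (h1 : V.L1 v = 0) (n : ℤ) (w : V.carrier) :
    V.th n v w = ((-1 : ℂ) ^ h) • V.op v (2 * h - n - 2) w := by
  rw [V.th_range hv n w ((h - V.lowb + 1).toNat + 1) (by omega), Finset.sum_eq_single 0]
  · rw [V.Ld_zero]; simp
  · intro i _ hi
    rw [V.Ld_of_L1_zero h1 i hi, V.op_zero_left]
  · intro hc
    simp at hc

lemma VOA.L1_one (V : VOA) : V.L1 V.one = 0 := V.create_nonneg _ _ (by norm_num)

lemma VOA.L1_omega (V : VOA) : V.L1 V.omega = 0 := by
  have h := V.virasoro 1 (-2) V.one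
  norm_num at h
  rw [V.create, V.create_nonneg V.omega 2 (by norm_num), V.op_zero_right,
    V.create_nonneg V.omega 0 (by norm_num)] at h
  simpa [VOA.L1, VOA.opB_apply] using h

lemma VOA.th_one (V : VOA) (n : ℤ) (w : V.carrier) :
    V.th n V.one w = if n = -1 then w else 0 := by
  rw [V.th_of_L1_zero V.one_wt V.L1_one, V.one_op]
  by_cases h : n = -1
  · subst h; simp
  · rw [if_neg h, if_neg (by omega), smul_zero]

lemma VOA.th_omega (V : VOA) (w : V.carrier) : V.th 1 V.omega w = V.op V.omega 1 w := by
  rw [V.th_of_L1_zero V.omega_wt V.L1_omega]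
  norm_num

/-- The subspace `D(V)` of the dual. -/
def VOA.DD (V : VOA) : Submodule ℂ (Module.Dual ℂ V.carrier) where
  carrier := {α | ∀ v : V.carrier, ∃ N : ℤ, ∀ n : ℤ, N ≤ n → ∀ w, α (V.th n v w) = 0}
  zero_mem' := fun v => ⟨0, fun n _ w => rfl⟩
  add_mem' := by
    intro a b ha hb v
    obtain ⟨N, hN⟩ := ha v
    obtain ⟨M, hM⟩ := hb v
    refine ⟨max N M, fun n hn w => ?_⟩
    rw [LinearMap.add_apply, hN n (le_trans (le_max_left _ _) hn),
      hM n (le_trans (le_max_right _ _) hn), add_zero]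
  smul_mem' := by
    intro c a ha v
    obtain ⟨N, hN⟩ := ha v
    refine ⟨N, fun n hn w => ?_⟩
    rw [LinearMap.smul_apply, hN n hn, smul_zero]

lemma VOA.DD_unif (V : VOA) {α : Module.Dual ℂ V.carrier} (hα : α ∈ V.DD) (x : ℕ → V.carrier)
    (hx : ∀ᶠ i in atTop, x i = 0) (m : ℤ) :
    ∃ N : ℤ, ∀ n : ℤ, N ≤ n → ∀ (i : ℕ) (w : V.carrier), α (V.th (m + n - i) (x i) w) = 0 := by
  obtain ⟨I, hI⟩ := eventually_atTop.1 hx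
  choose f hf using fun v => hα v
  obtain ⟨M, hM⟩ := ((Finset.range I).image fun i => f (x i)).exists_le
  refine ⟨M + I - m, fun n hn i w => ?_⟩
  by_cases hi : I ≤ i
  · rw [hI i hi, V.th_zero]; simp
  · have := hM (f (x i)) (Finset.mem_image_of_mem _ (Finset.mem_range.2 (by omega)))
    exact hf _ _ (by omega) w

lemma VOA.th_comm (V : VOA) (u v w : V.carrier) (m n : ℤ) : ∀ᶠ B in atTop,
    (∑ i ∈ Finset.range B, cchoose m i • V.th (m + n - i) (V.op u i v) w)
      = V.th n v (V.th m u w) - V.th m u (V.th n v w) := by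
  filter_upwards [V.dualB u v w 0 m n, eventually_ge_atTop 1] with B hB h1
  simp only [zero_add] at hB
  rw [hB, Finset.sum_eq_single 0]
  · simp [cc_zero]
  · intro i _ hi
    rw [cc_zero_left i hi]; simp
  · intro hc
    exact absurd (Finset.mem_range.2 h1) hc

lemma VOA.DD_closed (V : VOA) {α : Module.Dual ℂ V.carrier} (hα : α ∈ V.DD) (m : ℤ)
    (u : V.carrier) : α.comp (V.th m u) ∈ V.DD := by
  intro v
  obtain ⟨N, hN⟩ := hα v
  obtain ⟨M, hM⟩ := V.DD_unif hα (fun i => V.op u i v)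
    (by simpa using V.trunc_ev u v 0) m
  refine ⟨max N M, fun n hn w => ?_⟩
  obtain ⟨B, hB⟩ := (V.th_comm u v w m n).exists
  have h2 := congrArg α hB
  rw [map_sum, map_sub, hN n (le_trans (le_max_left _ _) hn), Finset.sum_eq_zero] at h2
  · rw [LinearMap.comp_apply]
    simpa using h2.symm
  · intro i _
    rw [map_smul, hM n (le_trans (le_max_right _ _) hn), smul_zero]

/-- The action of modes on `D(V)`. -/
noncomputable def VOA.dop (V : VOA) (v : V.carrier) (n : ℤ) (α : V.DD) : V.DD :=
  ⟨α.1.comp (V.th n v), V.DD_closed α.2 n v⟩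

lemma VOA.dop_apply (V : VOA) (v : V.carrier) (n : ℤ) (α : V.DD) (w : V.carrier) :
    (V.dop v n α).1 w = α.1 (V.th n v w) := rfl

lemma VOA.dop_trunc (V : VOA) (v : V.carrier) (α : V.DD) :
    ∃ N : ℤ, ∀ n : ℤ, N ≤ n → V.dop v n α = 0 := by
  obtain ⟨N, hN⟩ := α.2 v
  exact ⟨N, fun n hn => Subtype.ext (LinearMap.ext fun w => hN n hn w)⟩

lemma VOA.dop_trunc_ev (V : VOA) (v : V.carrier) (α : V.DD) (a : ℤ) :
    ∀ᶠ i : ℕ in atTop, V.dop v (a + i) α = 0 := by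
  obtain ⟨N, hN⟩ := V.dop_trunc v α
  filter_upwards [eventually_ge_atTop (N - a).toNat] with i hi
  exact hN _ (by omega)

lemma VOA.dop_zero (V : VOA) (n : ℤ) (α : V.DD) : V.dop 0 n α = 0 :=
  Subtype.ext (LinearMap.ext fun w => by rw [V.dop_apply, V.th_zero]; simp)

lemma VOA.dop_zero_right (V : VOA) (n : ℤ) (v : V.carrier) : V.dop v n 0 = 0 :=
  Subtype.ext (LinearMap.ext fun _ => rfl)

/-- Evaluation at `w`. -/
noncomputable def VOA.dev (V : VOA) (w : V.carrier) : V.DD →ₗ[ℂ] ℂ :=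
  (Module.Dual.eval ℂ V.carrier w).comp V.DD.subtype

lemma VOA.dev_apply (V : VOA) (w : V.carrier) (α : V.DD) : V.dev w α = α.1 w := rfl

lemma VOA.dop_borcherds (V : VOA) (u v : V.carrier) (α : V.DD) (l m n : ℤ) :
    (∑ᶠ i : ℕ, cchoose m i • V.dop (V.op u (l + (i : ℤ)) v) (m + n - (i : ℤ)) α)
      = ∑ᶠ i : ℕ, ((-1 : ℂ) ^ i * cchoose l i) •
          (V.dop u (l + m - (i : ℤ)) (V.dop v (n + (i : ℤ)) α)
            - ((-1 : ℂ) ^ l) • V.dop v (l + n - (i : ℤ)) (V.dop u (m + (i : ℤ)) α)) := by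
  have e1 := fin_ev (f := fun i : ℕ =>
      cchoose m i • V.dop (V.op u (l + (i : ℤ)) v) (m + n - (i : ℤ)) α) (by
    filter_upwards [V.trunc_ev u v l] with i hi
    rw [hi, V.dop_zero, smul_zero])
  have e2 := fin_ev (f := fun i : ℕ => ((-1 : ℂ) ^ i * cchoose l i) •
          (V.dop u (l + m - (i : ℤ)) (V.dop v (n + (i : ℤ)) α)
            - ((-1 : ℂ) ^ l) • V.dop v (l + n - (i : ℤ)) (V.dop u (m + (i : ℤ)) α))) (by
    filter_upwards [V.dop_trunc_ev v α n, V.dop_trunc_ev u α m] with i h1 h2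
    rw [h1, h2, V.dop_zero_right, V.dop_zero_right]; simp)
  refine Subtype.ext (LinearMap.ext fun w => ?_)
  obtain ⟨B, h1, h2, h3⟩ := (e1.and (e2.and (V.dualB u v w l m n))).exists
  rw [h1, h2, ← V.dev_apply, ← V.dev_apply, map_sum, map_sum]
  have := congrArg α.1 h3
  rw [map_sum, map_sum] at this
  simp only [map_smul, map_sub] at this
  simp only [map_smul, map_sub, V.dev_apply, V.dop_apply]
  exact this

/-- `D(V)` as a weak module. -/
noncomputable def VOA.DM (V : VOA) : WeakModule V where
  carrier := V.DD
  op := V.dop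
  op_linear_left := fun n α => ⟨fun a b => Subtype.ext (LinearMap.ext fun w => by
      change α.1 _ = α.1 _ + α.1 _
      rw [V.th_add, LinearMap.add_apply, map_add]), fun c a =>
    Subtype.ext (LinearMap.ext fun w => by
      change α.1 _ = c • α.1 _
      rw [V.th_smul, LinearMap.smul_apply, map_smul])⟩
  op_linear_right := fun u n => ⟨fun a b => rfl, fun c a => rfl⟩
  trunc := V.dop_trunc
  one_op := fun n α => Subtype.ext (LinearMap.ext fun w => by
    rw [V.dop_apply, V.th_one]
    split_ifs <;> simp)
  borcherds := V.dop_borcherds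

lemma VOA.DD_fin (V : VOA) (hA : V.classA) (α : V.DD) :
    {n : ℤ | ∃ w ∈ V.wtSpace n, α.1 w ≠ 0}.Finite := by
  have h : (show V.DM.carrier from α) ∈ (⨆ h : ℂ, V.DM.eig h) := by rw [hA V.DM]; exact Submodule.mem_top
  refine Submodule.iSup_induction (fun h : ℂ => V.DM.eig h)
    (motive := fun α : V.DM.carrier => {n : ℤ | ∃ w ∈ V.wtSpace n, Subtype.val (p := fun x => x ∈ V.DD) α w ≠ 0}.Finite) h ?_ ?_ ?_
  · intro c (β : V.DD) hβ
    refine Set.Subsingleton.finite ?_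
    have key : ∀ n : ℤ, (∃ w ∈ V.wtSpace n, β.1 w ≠ 0) → (n : ℂ) = c := by
      rintro n ⟨w, hw, hne⟩
      have e : V.dop V.omega 1 β - c • β = 0 := LinearMap.mem_ker.1 hβ
      have e2 := congrArg (V.dev w) e
      rw [map_sub, map_smul, map_zero, V.dev_apply, V.dev_apply, V.dop_apply, V.th_omega,
        V.L_zero n w hw, map_smul, smul_eq_mul, smul_eq_mul, ← sub_mul] at e2
      exact sub_eq_zero.1 ((mul_eq_zero.1 e2).resolve_right hne)
    intro a ha b hb
    exact_mod_cast (key a ha).trans (key b hb).symm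
  · refine Set.Finite.subset Set.finite_empty ?_
    rintro n ⟨w, _, hw⟩
    exact hw rfl
  · intro (a : V.DD) (b : V.DD) ha hb
    refine (ha.union hb).subset ?_
    rintro n ⟨w, hw, hne⟩
    by_contra hc
    simp only [Set.mem_union, Set.mem_ofPred_eq, not_or, not_exists, not_and, not_not] at hc
    apply hne
    change a.1 w + b.1 w = 0
    rw [hc.1 w hw, hc.2 w hw, add_zero]

end C2Proof

section C2Proof
open Filter

/-- Span of the `u_{-j} v` with `u`, `v` homogeneous, `j ≥ m`. -/
def VOA.Cm (V : VOA) (m : ℤ) : Submodule ℂ V.carrier :=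
  Submodule.span ℂ {x | ∃ a b j : ℤ, ∃ u ∈ V.wtSpace a, ∃ v ∈ V.wtSpace b,
    m ≤ j ∧ x = V.op u (-j) v}

lemma VOA.op_mem_Cm (V : VOA) {m a j : ℤ} {u : V.carrier} (hu : u ∈ V.wtSpace a) (hj : m ≤ j)
    (w : V.carrier) : V.op u (-j) w ∈ V.Cm m := by
  induction w using V.hom_induct with
  | hh b v hv => exact Submodule.subset_span ⟨a, b, j, u, hu, v, hv, hj, rfl⟩
  | ha x y hx hy =>
    rw [(V.op_linear_right _ _).map_add]
    exact Submodule.add_mem _ hx hy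

lemma VOA.pr_hom (V : VOA) {a : ℤ} {x : V.carrier} (hx : x ∈ V.wtSpace a) (n : ℤ) :
    V.pr n x = if a = n then x else 0 := by
  split_ifs with h
  · subst h; exact V.proj_eq a x hx
  · exact V.proj_ne a n h x hx

lemma VOA.pr_Cm (V : VOA) (m n : ℤ) {x : V.carrier} (hx : x ∈ V.Cm m) : V.pr n x ∈ V.Cm m := by
  induction hx using Submodule.span_induction with
  | mem x hx =>
    have hx' := hx
    obtain ⟨a, b, j, u, hu, v, hv, hj, rfl⟩ := hx
    rw [V.pr_hom (V.op_wt a b (-j) u hu v hv)]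
    split_ifs
    · exact Submodule.subset_span hx'
    · exact Submodule.zero_mem _
  | zero => rw [map_zero]; exact Submodule.zero_mem _
  | add x y _ _ hx hy => rw [map_add]; exact Submodule.add_mem _ hx hy
  | smul c x _ hx => rw [map_smul]; exact Submodule.smul_mem _ _ hx

lemma VOA.DD_of_Cm (V : VOA) (m : ℤ) (α : Module.Dual ℂ V.carrier) (hα : ∀ x ∈ V.Cm m, α x = 0) :
    α ∈ V.DD := by
  intro v
  induction v using V.hom_induct with
  | hh h v hv =>
    refine ⟨2 * h - 2 + m, fun n hn w => hα _ ?_⟩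
    rw [V.th_range hv n w _ le_rfl]
    refine Submodule.smul_mem _ _ (Submodule.sum_mem _ fun i _ => ?_)
    rw [show 2 * h - n - (i : ℤ) - 2 = -(n + i + 2 - 2 * h) by ring]
    exact V.op_mem_Cm (V.Ld_wt hv i) (by omega) w
  | ha x y hx hy =>
    obtain ⟨N, hN⟩ := hx
    obtain ⟨M, hM⟩ := hy
    refine ⟨max N M, fun n hn w => ?_⟩
    rw [V.th_add, LinearMap.add_apply, map_add, hN n (le_trans (le_max_left _ _) hn),
      hM n (le_trans (le_max_right _ _) hn), add_zero]

/-- Assemble functionals on weight spaces. -/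
noncomputable def VOA.glue (V : VOA) (f : ℤ → Module.Dual ℂ V.carrier) :
    Module.Dual ℂ V.carrier where
  toFun v := ∑ᶠ n : ℤ, f n (V.pr n v)
  map_add' x y := by
    rw [← finsum_add_distrib]
    · simp only [map_add]
    · exact (V.proj_finite x).subset fun h hh hc => hh (by
        have : V.pr h x = 0 := hc
        simp [this])
    · exact (V.proj_finite y).subset fun h hh hc => hh (by
        have : V.pr h y = 0 := hc
        simp [this])
  map_smul' c x := by
    rw [smul_finsum']
    · simp only [map_smul, RingHom.id_apply]
    · exact (V.proj_finite x).subset fun h hh hc => hh (by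
        have : V.pr h x = 0 := hc
        simp [this])

lemma VOA.glue_hom (V : VOA) (f : ℤ → Module.Dual ℂ V.carrier) {n : ℤ} {w : V.carrier}
    (hw : w ∈ V.wtSpace n) : V.glue f w = f n w := by
  change (∑ᶠ n : ℤ, f n (V.pr n w)) = f n w
  rw [finsum_eq_single _ n]
  · rw [V.pr_hom hw, if_pos rfl]
  · intro k hk
    rw [V.pr_hom hw, if_neg (Ne.symm hk), map_zero]

lemma VOA.Cm_big (V : VOA) (hA : V.classA) (m : ℤ) :
    ∃ K : ℤ, ∀ n : ℤ, K < n → V.wtSpace n ≤ V.Cm m := by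
  have hf : ∀ n : ℤ, ∃ f : Module.Dual ℂ V.carrier, (∀ x ∈ V.Cm m, f x = 0) ∧
      (¬ V.wtSpace n ≤ V.Cm m → ∃ x ∈ V.wtSpace n, f x ≠ 0) := by
    intro n
    by_cases h : V.wtSpace n ≤ V.Cm m
    · exact ⟨0, fun _ _ => rfl, fun hc => absurd h hc⟩
    · obtain ⟨x, hx, hx2⟩ := SetLike.not_le_iff_exists.1 h
      obtain ⟨f, hf1, hf2⟩ := Submodule.exists_le_ker_of_notMem hx2
      exact ⟨f, fun y hy => LinearMap.mem_ker.1 (hf2 hy), fun _ => ⟨x, hx, hf1⟩⟩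
  choose f hf1 hf2 using hf
  have hD : V.glue f ∈ V.DD := V.DD_of_Cm m _ fun x hx => by
    change (∑ᶠ n : ℤ, f n (V.pr n x)) = 0
    rw [finsum_congr fun n => hf1 n _ (V.pr_Cm m n hx), finsum_zero]
  obtain ⟨K, hK⟩ := (V.DD_fin hA ⟨_, hD⟩).bddAbove
  refine ⟨K, fun n hn => ?_⟩
  by_contra hc
  obtain ⟨x, hx, hne⟩ := hf2 n hc
  have : n ≤ K := hK ⟨x, hx, by rwa [V.glue_hom f hx]⟩
  omega

lemma VOA.C2_op (V : VOA) (j : ℕ) : ∀ u v : V.carrier, V.op u (-(j + 2 : ℤ)) v ∈ V.C2 := by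
  induction j with
  | zero => intro u v; exact Submodule.subset_span ⟨u, v, by norm_num⟩
  | succ j ih =>
    intro u v
    have h := V.L_neg_one u (-(j + 2 : ℤ)) v
    have h2 := ih (V.op V.omega 0 u) v
    rw [h] at h2
    have hne : (-((-(j + 2 : ℤ) : ℤ) : ℂ)) ≠ 0 := by
      rw [← Int.cast_neg, Int.cast_ne_zero]; omega
    have h3 := (Submodule.smul_mem_iff _ hne).1 h2
    rwa [show (-(j + 2 : ℤ)) - 1 = -(((j + 1 : ℕ) : ℤ) + 2) by push_cast; ring] at h3

lemma VOA.Cm_le_C2 (V : VOA) {m : ℤ} (hm : 2 ≤ m) : V.Cm m ≤ V.C2 := by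
  refine Submodule.span_le.2 ?_
  rintro x ⟨a, b, j, u, _, v, _, hj, rfl⟩
  have := V.C2_op (j - 2).toNat u v
  rwa [show -(((j - 2).toNat : ℤ) + 2) = -j by omega] at this

/-- The finite part. -/
def VOA.FF (V : VOA) (K : ℤ) : Submodule ℂ V.carrier :=
  ⨆ n ∈ Finset.Icc V.lowb K, V.wtSpace n

lemma VOA.FF_fg (V : VOA) (K : ℤ) : (V.FF K).FG :=
  Submodule.fg_biSup _ _ fun n _ => (Submodule.fg_iff_finiteDimensional _).2 (V.fd n)

lemma VOA.le_FF (V : VOA) {K n : ℤ} (hn : n ≤ K) : V.wtSpace n ≤ V.FF K := by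
  by_cases h : n < V.lowb
  · intro x hx
    rw [V.eq_zero_of_wt h hx]
    exact Submodule.zero_mem _
  · exact le_iSup₂_of_le n (Finset.mem_Icc.2 ⟨by omega, hn⟩) le_rfl

lemma VOA.C2_fin (V : VOA) (hA : V.classA) : FiniteDimensional ℂ (V.carrier ⧸ V.C2) := by
  obtain ⟨K, hK⟩ := V.Cm_big hA 2
  refine ⟨?_⟩
  have := (V.FF_fg K).map V.C2.mkQ
  suffices h : Submodule.map V.C2.mkQ (V.FF K) = ⊤ by
    rw [h] at this
    exact this
  rw [eq_top_iff]
  rintro x -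
  obtain ⟨v, rfl⟩ := V.C2.mkQ_surjective x
  induction v using V.hom_induct with
  | hh n v hv =>
    by_cases h : n ≤ K
    · exact Submodule.mem_map_of_mem (V.le_FF h hv)
    · have : V.C2.mkQ v = 0 := by
        rw [Submodule.mkQ_apply, Submodule.Quotient.mk_eq_zero]
        exact V.Cm_le_C2 le_rfl (hK n (by omega) hv)
      rw [this]
      exact Submodule.zero_mem _
  | ha x y hx hy =>
    rw [map_add]
    exact Submodule.add_mem _ hx hy

/-- Span of iterated modes. -/
def VOA.GG (V : VOA) (U : Set V.carrier) : Submodule ℂ V.carrier :=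
  Submodule.span ℂ {x : V.carrier | ∃ l : List (V.carrier × ℤ),
    (∀ p ∈ l, p.1 ∈ U) ∧ x = V.iterApply l V.one}

lemma VOA.GG_step (V : VOA) {U : Set V.carrier} {u : V.carrier} (hu : u ∈ U) (n : ℤ)
    {w : V.carrier} (hw : w ∈ V.GG U) : V.op u n w ∈ V.GG U := by
  induction hw using Submodule.span_induction with
  | mem x hx =>
    obtain ⟨l, hl, rfl⟩ := hx
    refine Submodule.subset_span ⟨(u, n) :: l, ?_, rfl⟩
    intro p hp
    rcases List.mem_cons.1 hp with rfl | hp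
    · exact hu
    · exact hl p hp
  | zero => rw [V.op_zero_right]; exact Submodule.zero_mem _
  | add x y _ _ hx hy => rw [(V.op_linear_right _ _).map_add]; exact Submodule.add_mem _ hx hy
  | smul c x _ hx => rw [(V.op_linear_right _ _).map_smul]; exact Submodule.smul_mem _ _ hx

lemma VOA.GG_list (V : VOA) {U : Set V.carrier} (l : List (V.carrier × ℤ))
    (hl : ∀ p ∈ l, p.1 ∈ U) : ∀ (n : ℤ), ∀ w ∈ V.GG U,
      V.op (V.iterApply l V.one) n w ∈ V.GG U := by
  induction l with
  | nil =>
    intro n w hw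
    change V.op V.one n w ∈ _
    rw [V.one_op]
    split_ifs
    · exact hw
    · exact Submodule.zero_mem _
  | cons p l ih =>
    intro n w hw
    have hp : p.1 ∈ U := hl p (by simp)
    have ih' := ih fun q hq => hl q (by simp [hq])
    change V.op (V.op p.1 p.2 (V.iterApply l V.one)) n w ∈ _
    generalize V.iterApply l V.one = x at ih'
    have hb := V.borcherds p.1 x w p.2 0 n
    rw [finsum_eq_single _ 0] at hb
    · simp only [cc_zero, one_smul, Nat.cast_zero, add_zero, zero_add, sub_zero] at hb
      rw [hb]
      refine finsum_induction (· ∈ V.GG U) (Submodule.zero_mem _)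
        (fun _ _ => Submodule.add_mem _) fun i => Submodule.smul_mem _ _ (Submodule.sub_mem _ ?_
          (Submodule.smul_mem _ _ ?_))
      · exact V.GG_step hp _ (ih' _ _ hw)
      · exact ih' _ _ (V.GG_step hp _ hw)
    · intro i hi
      rw [cc_zero_left i hi, zero_smul]

lemma VOA.GG_mul (V : VOA) {U : Set V.carrier} {u w : V.carrier} (hu : u ∈ V.GG U) (n : ℤ)
    (hw : w ∈ V.GG U) : V.op u n w ∈ V.GG U := by
  induction hu using Submodule.span_induction with
  | mem x hx =>
    obtain ⟨l, hl, rfl⟩ := hx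
    exact V.GG_list l hl n w hw
  | zero => rw [V.op_zero_left]; exact Submodule.zero_mem _
  | add x y _ _ hx hy =>
    rw [(V.op_linear_left _ _).map_add]; exact Submodule.add_mem _ hx hy
  | smul c x _ hx => rw [(V.op_linear_left _ _).map_smul]; exact Submodule.smul_mem _ _ hx

lemma VOA.fin_gen (V : VOA) (hA : V.classA) : V.FinitelyGenerated := by
  obtain ⟨K, hK⟩ := V.Cm_big hA (max 2 (2 - V.lowb))
  obtain ⟨S, hS⟩ := V.FF_fg K
  refine ⟨S, ?_⟩
  change V.GG ↑S = ⊤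
  have hF : V.FF K ≤ V.GG ↑S := by
    rw [← hS, Submodule.span_le]
    intro s hs
    refine Submodule.subset_span ⟨[(s, -1)], ?_, ?_⟩
    · intro p hp
      rw [List.mem_singleton.1 hp]
      exact hs
    · exact (V.create s).symm
  have key : ∀ N : ℕ, ∀ n : ℤ, n ≤ K + N → V.wtSpace n ≤ V.GG ↑S := by
    intro N
    induction N with
    | zero => intro n hn; exact (V.le_FF (by omega)).trans hF
    | succ N ih =>
      intro n hn
      by_cases hnN : n ≤ K + N
      · exact ih n hnN
      have hpr : ∀ x ∈ V.Cm (max 2 (2 - V.lowb)), V.pr n x ∈ V.GG ↑S := by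
        intro x hx
        induction hx using Submodule.span_induction with
        | mem x hx =>
          obtain ⟨a, b, j, u, hu, v, hv, hj, rfl⟩ := hx
          rw [V.pr_hom (V.op_wt a b (-j) u hu v hv)]
          split_ifs with hab
          · by_cases ha : a < V.lowb
            · rw [V.eq_zero_of_wt ha hu, V.op_zero_left]; exact Submodule.zero_mem _
            by_cases hb : b < V.lowb
            · rw [V.eq_zero_of_wt hb hv, V.op_zero_right]; exact Submodule.zero_mem _
            exact V.GG_mul (ih a (by omega) hu) _ (ih b (by omega) hv)
          · exact Submodule.zero_mem _
        | zero => rw [map_zero]; exact Submodule.zero_mem _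
        | add x y _ _ hx hy => rw [map_add]; exact Submodule.add_mem _ hx hy
        | smul c x _ hx => rw [map_smul]; exact Submodule.smul_mem _ _ hx
      intro x hx
      have := hpr x (hK n (by omega) hx)
      rwa [V.pr_hom hx, if_pos rfl] at this
  rw [eq_top_iff]
  rintro x -
  induction x using V.hom_induct with
  | hh n v hv => exact key (n - K).toNat n (by omega) hv
  | ha x y hx hy => exact Submodule.add_mem _ hx hy

lemma VOA.regular_classA (V : VOA) (h : V.regular) : V.classA := by
  intro M
  obtain ⟨ι, S, h1, _, h3⟩ := h M
  rw [eq_top_iff, ← h3]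
  refine iSup_le fun i => (h1 i).2.1.trans ?_
  exact iSup_mono fun h => inf_le_left

end C2Proof

/-- Every VOA of class 𝒜 satisfies the `C₂`-finiteness condition
and is finitely generated; in particular every regular VOA satisfies the
`C₂`-finiteness condition and is finitely generated. -/
theorem C2_finite_and_finitelyGenerated (V : VOA) :
    (V.classA → FiniteDimensional ℂ (V.carrier ⧸ V.C2) ∧ V.FinitelyGenerated) ∧
    (V.regular → FiniteDimensional ℂ (V.carrier ⧸ V.C2) ∧ V.FinitelyGenerated) := by
  exact ⟨fun h => ⟨V.C2_fin h, V.fin_gen h⟩, fun h =>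
    ⟨V.C2_fin (V.regular_classA h), V.fin_gen (V.regular_classA h)⟩⟩
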